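/- Fix integers N ≥ 2, d ≥ 1 and let K = dN + 1. There exist K functions f_1, …, f_K : (ℝ^d)^N → ℝ, each anti-symmetric, vanishing on Ω, and bounded in absolute value by 1, such that for every anti-symmetric continuous function Ψ : (ℝ^d)^N → ℝ there exist continuous symmetric functions g_1, …, g_K : (ℝ^d)^N → ℝ with Ψ(X) = ∑_{k=1}^{K} f_k(X)·g_k(X) for all X ∈ (ℝ^d)^N. -/

import Mathlib

/-!
Each direction `u` of `ℝ^d` gives a continuous anti-symmetric function, the Vandermonde determinant
of the numbers `u · X_i`, which is nonzero exactly when these numbers are distinct. The common zeros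
of several such functions form a finite union of subspaces of `(ℝ^d)^N`. A new direction, chosen off
finitely many hyperplanes, lowers the dimension of all of these subspaces that do not already lie in
`Ω`, so after `dN + 1` directions the common zeros are all in `Ω`.

Let `F` be the vector of these `dN + 1` functions and `f = F / ‖F‖`, with `0 / 0 = 0`, so that
`‖f‖ = 1` off `Ω` and `Ψ = ∑ f_k (f_k Ψ)`. Although `f` may be discontinuous on `Ω`, it is bounded
and `Ψ` vanishes there, so `f_k Ψ` is continuous.
-/

/-- The intrinsic zero set `Ω`. -/
def intrinsicZero (N d : ℕ) : Set (Fin N → Fin d → ℝ) :=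
  {X | ∃ i j : Fin N, i ≠ j ∧ X i = X j}

/-- `Ψ` is anti-symmetric. -/
def IsAntisym (N d : ℕ) (Ψ : (Fin N → Fin d → ℝ) → ℝ) : Prop :=
  ∀ (π : Equiv.Perm (Fin N)) (X : Fin N → Fin d → ℝ),
    Ψ (fun i => X (π i)) = ((Equiv.Perm.sign π : ℤ) : ℝ) * Ψ X

/-- `Ψ` is symmetric. -/
def IsSym (N d : ℕ) (Ψ : (Fin N → Fin d → ℝ) → ℝ) : Prop :=
  ∀ (π : Equiv.Perm (Fin N)) (X : Fin N → Fin d → ℝ),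
    Ψ (fun i => X (π i)) = Ψ X

section Directions

open Module

variable {𝕜 V E P ι : Type*} [Field 𝕜] [Infinite 𝕜] [AddCommGroup V] [Module 𝕜 V]
  [AddCommGroup E] [Module 𝕜 E] [Finite P]

lemma exists_dual_le_ker_of_le_ker_comp (D : P → V →ₗ[𝕜] E) {S : Set (Submodule 𝕜 V)}
    (hS : S.Finite) :
    ∃ φ : Dual 𝕜 E, ∀ L ∈ S, ∀ p, L ≤ (φ ∘ₗ D p).ker → L ≤ (D p).ker := by
  have := hS.to_subtype
  let Q := {q : S × P // ¬ q.1.1 ≤ (D q.2).ker}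
  have exists_witness (q : Q) : ∃ x ∈ q.1.1.1, D q.1.2 x ≠ 0 := SetLike.not_le_iff_exists.mp q.2
  choose x hxL hDx using exists_witness
  obtain ⟨φ, hφ⟩ := exists_dual_forall_apply_ne_zero (K := 𝕜) (fun q : Q => D q.1.2 (x q)) hDx
  refine ⟨φ, fun L hL p hle => ?_⟩
  by_contra hnle
  exact hφ ⟨(⟨L, hL⟩, p), hnle⟩ (hle (hxL ⟨(⟨L, hL⟩, p), hnle⟩))

variable [FiniteDimensional 𝕜 V]

lemma exists_dual_family_forall_mem_ne_zero (D : P → V →ₗ[𝕜] E) (n : ℕ) {S : Set (Submodule 𝕜 V)}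
    (hS : S.Finite) (hdim : ∀ L ∈ S, (∀ p, ¬ L ≤ (D p).ker) → finrank 𝕜 L < n) :
    ∃ φ : Fin n → Dual 𝕜 E, ∀ L ∈ S, ∀ x ∈ L, (∀ p, D p x ≠ 0) → ∃ k, ∀ p, φ k (D p x) ≠ 0 := by
  induction n generalizing S with
  | zero =>
    refine ⟨Fin.elim0, fun L hL x hx hDx => ?_⟩
    exact absurd (hdim L hL fun p hle => hDx p (hle hx)) (Nat.not_lt_zero _)
  | succ n ih =>
    obtain ⟨φ₀, hφ₀⟩ := exists_dual_le_ker_of_le_ker_comp D hS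
    let cut (L : Submodule 𝕜 V) (p : P) := L ⊓ (φ₀ ∘ₗ D p).ker
    have hcut : ∀ L' ∈ Set.image2 cut S Set.univ, (∀ p, ¬ L' ≤ (D p).ker) → finrank 𝕜 L' < n := by
      rintro _ ⟨L, hL, p, -, rfl⟩ hnle
      have hLnle (q : P) : ¬ L ≤ (D q).ker := fun hle => hnle q (inf_le_left.trans hle)
      have hlt : cut L p < L := inf_lt_left.mpr fun hle => hLnle p (hφ₀ L hL p hle)
      have := Submodule.finrank_lt_finrank_of_lt hlt
      have := hdim L hL hLnle
      lia
    obtain ⟨φ, hφ⟩ := ih (hS.image2 cut Set.finite_univ) hcut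
    refine ⟨Fin.cons φ₀ φ, fun L hL x hx hDx => ?_⟩
    by_cases hφ₀x : ∀ p, φ₀ (D p x) ≠ 0
    · exact ⟨0, hφ₀x⟩
    · push Not at hφ₀x
      obtain ⟨p, hp⟩ := hφ₀x
      obtain ⟨k, hk⟩ := hφ _ (Set.mem_image2_of_mem hL (Set.mem_univ p)) x ⟨hx, hp⟩ hDx
      exact ⟨k.succ, hk⟩

lemma exists_dual_family_forall_ne_zero (D : P → V →ₗ[𝕜] E) {n : ℕ} (hn : finrank 𝕜 V < n) :
    ∃ φ : Fin n → Dual 𝕜 E, ∀ x, (∀ p, D p x ≠ 0) → ∃ k, ∀ p, φ k (D p x) ≠ 0 := by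
  obtain ⟨φ, hφ⟩ := exists_dual_family_forall_mem_ne_zero D n (Set.finite_singleton ⊤)
    (by simpa using fun _ => hn)
  exact ⟨φ, fun x => hφ ⊤ rfl x trivial⟩

lemma exists_dual_family_injective_comp [FiniteDimensional 𝕜 E] [Finite ι] {n : ℕ}
    (hn : finrank 𝕜 (ι → E) < n) :
    ∃ φ : Fin n → Dual 𝕜 E, ∀ X : ι → E, X.Injective → ∃ k, (φ k ∘ X).Injective := by
  let coord (i : ι) : (ι → E) →ₗ[𝕜] E := LinearMap.proj i
  let D (p : {p : ι × ι // p.1 ≠ p.2}) : (ι → E) →ₗ[𝕜] E := coord p.1.1 - coord p.1.2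
  obtain ⟨φ, hφ⟩ := exists_dual_family_forall_ne_zero D hn
  refine ⟨φ, fun X hX => ?_⟩
  obtain ⟨k, hk⟩ := hφ X fun p => sub_ne_zero.mpr (hX.ne p.2)
  refine ⟨k, fun i j hij => ?_⟩
  by_contra hne
  exact hk ⟨(i, j), hne⟩ (by simpa [D, coord, sub_eq_zero] using hij)

end Directions

section Normalize

open NormedSpace

variable {α V : Type*} [NormedAddCommGroup V] [NormedSpace ℝ V]

lemma norm_normalize_le_one (v : V) : ‖normalize v‖ ≤ 1 := by
  rcases eq_or_ne v 0 with rfl | hv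
  · simp
  · exact (norm_normalize hv).le

lemma continuousAt_normalize {v : V} (hv : v ≠ 0) : ContinuousAt (normalize : V → V) v :=
  (continuousAt_id.norm.inv₀ (norm_ne_zero_iff.mpr hv)).smul continuousAt_id

lemma continuous_smul_normalize [TopologicalSpace α] {g : α → ℝ} {F : α → V} (hg : Continuous g)
    (hF : Continuous F) (hgF : ∀ x, F x = 0 → g x = 0) :
    Continuous fun x => g x • normalize (F x) := by
  refine continuous_iff_continuousAt.mpr fun x => ?_
  by_cases hx : F x = 0
  · have hg_lim : Filter.Tendsto g (nhds x) (nhds 0) := by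
      simpa only [hgF x hx] using hg.tendsto x
    have h_bdd : Filter.IsBoundedUnder (· ≤ ·) (nhds x) (norm ∘ fun y => normalize (F y)) :=
      Filter.isBoundedUnder_of ⟨1, fun y => norm_normalize_le_one (F y)⟩
    simpa [ContinuousAt, hgF x hx] using hg_lim.zero_smul_isBoundedUnder_le h_bdd
  · exact hg.continuousAt.smul ((continuousAt_normalize hx).comp hF.continuousAt)

lemma eq_sum_normalize_mul {κ : Type*} [Fintype κ] {v : EuclideanSpace ℝ κ} {c : ℝ}
    (hc : v = 0 → c = 0) : c = ∑ k, normalize v k * (c * normalize v k) := by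
  rcases eq_or_ne v 0 with rfl | hv
  · simp [hc rfl]
  · calc c = c * ‖normalize v‖ ^ 2 := by rw [norm_normalize hv, one_pow, mul_one]
      _ = ∑ k, c * normalize v k ^ 2 := by rw [EuclideanSpace.real_norm_sq_eq, Finset.mul_sum]
      _ = ∑ k, normalize v k * (c * normalize v k) := Finset.sum_congr rfl fun k _ => by ring

end Normalize

section Symmetry

variable {N d : ℕ}

lemma mem_intrinsicZero_iff {X : Fin N → Fin d → ℝ} : X ∈ intrinsicZero N d ↔ ¬ X.Injective := by
  simp only [intrinsicZero, Set.mem_ofPred_eq, Function.not_injective_iff, and_comm]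

lemma IsAntisym.eq_zero_of_mem {Ψ : (Fin N → Fin d → ℝ) → ℝ} (h : IsAntisym N d Ψ)
    {X : Fin N → Fin d → ℝ} (hX : X ∈ intrinsicZero N d) : Ψ X = 0 := by
  obtain ⟨i, j, hij, hXij⟩ := hX
  have hswap : (fun l => X (Equiv.swap i j l)) = X := by
    funext l
    simp only [Equiv.swap_apply_def]
    split_ifs <;> simp_all
  have hneg : Ψ X = -Ψ X := by simpa [hswap, Equiv.Perm.sign_swap hij] using h (Equiv.swap i j) X
  exact self_eq_neg.mp hneg

lemma IsAntisym.mul {Ψ Φ : (Fin N → Fin d → ℝ) → ℝ} (hΨ : IsAntisym N d Ψ)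
    (hΦ : IsAntisym N d Φ) : IsSym N d fun X => Ψ X * Φ X := by
  intro π X
  simp only [hΨ π X, hΦ π X]
  rcases Int.units_eq_one_or π.sign with hπ | hπ <;> simp [hπ]

lemma isAntisym_normalize_apply {κ : Type*} [Fintype κ]
    {F : (Fin N → Fin d → ℝ) → EuclideanSpace ℝ κ} (hF : ∀ k, IsAntisym N d fun X => F X k)
    (k : κ) : IsAntisym N d fun X => NormedSpace.normalize (F X) k := by
  intro π X
  have hFπ : F (fun i => X (π i)) = ((π.sign : ℤ) : ℝ) • F X := by
    ext l
    exact hF l π X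
  rcases Int.units_eq_one_or π.sign with hπ | hπ <;> simp [hFπ, hπ]

end Symmetry

/-- The Vandermonde determinant of the values of `u` at the points `X_i`. With `u` running over
linear functionals these are the anti-symmetric functions from which the `f_k` are built. -/
noncomputable def vandermondeAlong {E R : Type*} [CommRing R] {N : ℕ} (u : E → R) (X : Fin N → E) :
    R :=
  (Matrix.vandermonde (u ∘ X)).det

namespace vandermondeAlong

lemma ne_zero_iff {E R : Type*} [CommRing R] [IsDomain R] {N : ℕ} {u : E → R} {X : Fin N → E} :
    vandermondeAlong u X ≠ 0 ↔ (u ∘ X).Injective :=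
  Matrix.det_vandermonde_ne_zero_iff

lemma isAntisym {N d : ℕ} (u : (Fin d → ℝ) → ℝ) : IsAntisym N d (vandermondeAlong u) :=
  fun π X => Matrix.det_permute π (Matrix.vandermonde (u ∘ X))

lemma continuous {E R : Type*} [TopologicalSpace E] [CommRing R] [TopologicalSpace R]
    [IsTopologicalRing R] {N : ℕ} {u : E → R} (hu : Continuous u) :
    Continuous (vandermondeAlong u : (Fin N → E) → R) :=
  .matrix_det <| continuous_matrix fun i j => by
    simp only [Matrix.vandermonde_apply, Function.comp_apply]
    fun_prop

end vandermondeAlong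

lemma exists_continuous_isAntisym_family (N d : ℕ) :
    ∃ F : (Fin N → Fin d → ℝ) → EuclideanSpace ℝ (Fin (d * N + 1)), Continuous F ∧
      (∀ k, IsAntisym N d fun X => F X k) ∧ ∀ X, F X = 0 → X ∈ intrinsicZero N d := by
  obtain ⟨φ, hφ⟩ := exists_dual_family_injective_comp (𝕜 := ℝ) (ι := Fin N) (E := Fin d → ℝ)
    (n := d * N + 1) (by simp [Module.finrank_pi_fintype, mul_comm])
  refine ⟨fun X => WithLp.toLp 2 fun k => vandermondeAlong (φ k) X, ?_,
    fun k => vandermondeAlong.isAntisym (φ k), fun X hX => ?_⟩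
  · exact (PiLp.continuous_toLp 2 _).comp <| continuous_pi fun k =>
      vandermondeAlong.continuous (φ k).continuous_of_finiteDimensional
  · refine mem_intrinsicZero_iff.mpr fun hinj => ?_
    obtain ⟨k, hk⟩ := hφ X hinj
    exact vandermondeAlong.ne_zero_iff.mpr hk (by simpa using congrArg (fun v => v k) hX)

theorem stmt_3 (N d : ℕ) (hN : 2 ≤ N) (hd : 1 ≤ d) (K : ℕ) (hK : K = d * N + 1) :
    ∃ f : Fin K → (Fin N → Fin d → ℝ) → ℝ,
      (∀ k, IsAntisym N d (f k)) ∧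
      (∀ k, ∀ X ∈ intrinsicZero N d, f k X = 0) ∧
      (∀ k X, |f k X| ≤ 1) ∧
      ∀ Ψ : (Fin N → Fin d → ℝ) → ℝ, Continuous Ψ → IsAntisym N d Ψ →
        ∃ g : Fin K → (Fin N → Fin d → ℝ) → ℝ,
          (∀ k, Continuous (g k)) ∧ (∀ k, IsSym N d (g k)) ∧
          ∀ X, Ψ X = ∑ k : Fin K, f k X * g k X := by
  subst hK
  obtain ⟨F, hF, hF_anti, hF_zero⟩ := exists_continuous_isAntisym_family N d
  let f (k : Fin (d * N + 1)) (X : Fin N → Fin d → ℝ) : ℝ := NormedSpace.normalize (F X) k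
  have hf : ∀ k, IsAntisym N d (f k) := isAntisym_normalize_apply hF_anti
  have hf_le (k X) : |f k X| ≤ 1 :=
    (PiLp.norm_apply_le (NormedSpace.normalize (F X)) k).trans (norm_normalize_le_one _)
  refine ⟨f, hf, fun k X hX => (hf k).eq_zero_of_mem hX, hf_le, fun Ψ hΨ hΨ_anti => ?_⟩
  have hΨF (X) (hX : F X = 0) : Ψ X = 0 := hΨ_anti.eq_zero_of_mem (hF_zero X hX)
  refine ⟨fun k X => Ψ X * f k X, fun k => ?_, fun k => hΨ_anti.mul (hf k), fun X => ?_⟩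
  · exact (PiLp.continuous_apply 2 _ k).comp (continuous_smul_normalize hΨ hF hΨF)
  · exact eq_sum_normalize_mul (hΨF X)
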